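/- Suppose t₀ = max 𝕋 and Ω = ℝⁿ. If f satisfies (H∞) and (H^glob_Lip), then the shifted Δ-Cauchy problem (Δ-CP^σ) has a unique maximal solution (q,I_𝕋), and this maximal solution is global, i.e. I_𝕋 = 𝕋. -/

import Mathlib

/-!
Since `t₀ = max T`, the only intervals to consider are the `[a, t₀]_T` with `a < t₀`, and because
the equation is shifted its integral form
`q(u) = q₀ - ∫_{[u,t₀)_T} f(q(σ(s)), s) Δs` is explicit: the value at `u` is computed from values
of `q` to the right of `u`, so no implicit step has to be solved at right-scattered points.

The Δ-integral is rewritten as a Lebesgue integral over the real interval `[u, t₀]`, by evaluating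
the integrand at the largest point of `T` below `s` (`tsFloor`): across the gap `(r, σ(r))` the
integrand is then constant, which reproduces the atom of mass `μ(r)` at `r`. The hypotheses on `f`
transfer to this lifted right-hand side (`exists_liftData`), and the integral equation becomes a
fixed point equation for `picardOp`. As `σ(s) ≥ s`, the operator contracts distances by `1/2` in
the norm weighted by `exp((2L+1)(t₀ - u))` on every `[a, t₀]_T` (`LiftData.contraction`), so there
is a fixed point on all of `T` (`LiftData.exists_fixed`), unique on each `[a, t₀]_T`
(`LiftData.unique`).

Fixed points are solutions (`LiftData.isSol_of_fixed`): Lebesgue differentiation handles the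
right-dense points, and the image of `picardOp` is affine across gaps. Conversely
(`LiftData.fixed_of_isSol`), the difference of a solution and its Picard image is absolutely
continuous with zero Δ-derivative; its extension to the real line, constant across gaps, is
absolutely continuous with zero derivative a.e., hence constant (`DeltaAC.const_of_deriv_zero`).
So every solution is a restriction of the global one, which gives the theorem.
-/

open MeasureTheory Set Filter Classical

noncomputable section
open scoped Classical

/-- The forward jump operator `σ` of a time scale `T`. -/
def tsSigma (T : Set ℝ) (t : ℝ) : ℝ :=
  if ({s | s ∈ T ∧ t < s}).Nonempty then sInf {s | s ∈ T ∧ t < s} else t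

/-- The backward jump operator `ρ` of a time scale `T`. -/
def tsRho (T : Set ℝ) (t : ℝ) : ℝ :=
  if ({s | s ∈ T ∧ s < t}).Nonempty then sSup {s | s ∈ T ∧ s < t} else t

/-- The graininess function `μ(t) = σ(t) - t`. -/
def tsGrain (T : Set ℝ) (t : ℝ) : ℝ := tsSigma T t - t

/-- `t` is a right-scattered point of `T`. -/
def RightScattered (T : Set ℝ) (t : ℝ) : Prop := t < tsSigma T t

/-- `t` is a right-dense point of `T`. -/
def RightDense (T : Set ℝ) (t : ℝ) : Prop := tsSigma T t = t

/-- `t` is a left-scattered point of `T`. -/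
def LeftScattered (T : Set ℝ) (t : ℝ) : Prop := tsRho T t < t

/-- `t` is a left-dense point of `T`. -/
def LeftDense (T : Set ℝ) (t : ℝ) : Prop := tsRho T t = t

/-- `𝕋 \ {sup 𝕋}`: the time scale minus its maximum (if the maximum exists). -/
def tsUpDomain (T : Set ℝ) : Set ℝ := {t | t ∈ T ∧ ¬ IsGreatest T t}

/-- The Lebesgue Δ-measure on the time scale `T`: Lebesgue measure restricted to `T`
plus `Σ_{r ∈ ℛ} μ(r)·δ_r` over right-scattered points `r`. -/
def deltaMeasure (T : Set ℝ) : Measure ℝ :=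
  volume.restrict T +
    Measure.sum (fun r : {t : ℝ // t ∈ T ∧ RightScattered T t} =>
      ENNReal.ofReal (tsGrain T r.1) • Measure.dirac r.1)

/-- Δ-differentiability of `q` at `t`, with Δ-derivative `q'`. -/
def HasDeltaDerivAt {n : ℕ} (T : Set ℝ) (q : ℝ → EuclideanSpace ℝ (Fin n))
    (q' : EuclideanSpace ℝ (Fin n)) (t : ℝ) : Prop :=
  ∀ ε > (0:ℝ), ∃ U ∈ nhds t, ∀ s ∈ U ∩ T,
    ‖q (tsSigma T t) - q s - (tsSigma T t - s) • q'‖ ≤ ε * |tsSigma T t - s|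

/-- Absolute continuity of `q` on `[a,b]_𝕋`. -/
def DeltaAC {n : ℕ} (T : Set ℝ) (a b : ℝ) (q : ℝ → EuclideanSpace ℝ (Fin n)) : Prop :=
  ∀ ε > (0:ℝ), ∃ δ > (0:ℝ), ∀ (m : ℕ) (u v : ℕ → ℝ),
    (∀ k < m, u k ∈ Icc a b ∩ T) → (∀ k < m, v k ∈ Icc a b ∩ T) →
    (∀ k < m, u k ≤ v k) →
    (∀ i < m, ∀ j < m, i ≠ j → Disjoint (Icc (u i) (v i)) (Icc (u j) (v j))) →
    (∑ k ∈ Finset.range m, (v k - u k)) < δ →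
    (∑ k ∈ Finset.range m, ‖q (v k) - q (u k)‖) < ε

/-- `f` is a Δ-Carathéodory function on `Ω × 𝕋\{sup 𝕋}`. -/
def DeltaCaratheodory {n : ℕ} (T : Set ℝ) (Ω : Set (EuclideanSpace ℝ (Fin n)))
    (f : EuclideanSpace ℝ (Fin n) → ℝ → EuclideanSpace ℝ (Fin n)) : Prop :=
  (∀ x ∈ Ω, AEMeasurable (fun t => f x t) ((deltaMeasure T).restrict (tsUpDomain T))) ∧
    ∀ᵐ t ∂((deltaMeasure T).restrict (tsUpDomain T)), ContinuousOn (fun x => f x t) Ω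

/-- Hypothesis (H∞): `f` is locally bounded. -/
def HInfty {n : ℕ} (T : Set ℝ) (Ω : Set (EuclideanSpace ℝ (Fin n)))
    (f : EuclideanSpace ℝ (Fin n) → ℝ → EuclideanSpace ℝ (Fin n)) : Prop :=
  ∀ K : Set (EuclideanSpace ℝ (Fin n)), K ⊆ Ω → IsCompact K →
    ∀ a ∈ T, ∀ b ∈ T, a < b →
      ∃ M : ℝ, 0 ≤ M ∧
        ∀ᵐ t ∂((deltaMeasure T).restrict (Ico a b ∩ T)), ∀ x ∈ K, ‖f x t‖ ≤ M

/-- Hypothesis (H^rd_loc-Lip): local Lipschitz continuity at right-dense points. -/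
def HrdLocLip {n : ℕ} (T : Set ℝ) (Ω : Set (EuclideanSpace ℝ (Fin n)))
    (f : EuclideanSpace ℝ (Fin n) → ℝ → EuclideanSpace ℝ (Fin n)) : Prop :=
  ∀ xb ∈ Ω, ∀ tb ∈ T, ¬ IsGreatest T tb → RightDense T tb →
    ∃ R > (0:ℝ), ∃ δ > (0:ℝ), ∃ L : ℝ, 0 ≤ L ∧
      Metric.closedBall xb R ⊆ Ω ∧ tb + δ ∈ T ∧
      ∀ᵐ t ∂((deltaMeasure T).restrict (Ico tb (tb + δ) ∩ T)),
        ∀ x₁ ∈ Metric.closedBall xb R, ∀ x₂ ∈ Metric.closedBall xb R,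
          ‖f x₁ t - f x₂ t‖ ≤ L * ‖x₁ - x₂‖

/-- Hypothesis (H^ld_loc-Lip): local Lipschitz continuity at left-dense points. -/
def HldLocLip {n : ℕ} (T : Set ℝ) (Ω : Set (EuclideanSpace ℝ (Fin n)))
    (f : EuclideanSpace ℝ (Fin n) → ℝ → EuclideanSpace ℝ (Fin n)) : Prop :=
  ∀ xb ∈ Ω, ∀ tb ∈ T, ¬ IsLeast T tb → LeftDense T tb →
    ∃ R > (0:ℝ), ∃ δ > (0:ℝ), ∃ L : ℝ, 0 ≤ L ∧
      Metric.closedBall xb R ⊆ Ω ∧ tb - δ ∈ T ∧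
      ∀ᵐ t ∂((deltaMeasure T).restrict (Ico (tb - δ) tb ∩ T)),
        ∀ x₁ ∈ Metric.closedBall xb R, ∀ x₂ ∈ Metric.closedBall xb R,
          ‖f x₁ t - f x₂ t‖ ≤ L * ‖x₁ - x₂‖

/-- Hypothesis (H^forw_stab): `G⁺(t) : x ↦ x + μ(t) f(x,t)` maps `Ω` into `Ω`. -/
def HforwStab {n : ℕ} (T : Set ℝ) (Ω : Set (EuclideanSpace ℝ (Fin n)))
    (f : EuclideanSpace ℝ (Fin n) → ℝ → EuclideanSpace ℝ (Fin n)) : Prop :=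
  ∀ t ∈ T, RightScattered T t → ∀ x ∈ Ω, x + tsGrain T t • f x t ∈ Ω

/-- Hypothesis (H^back_regr): `G⁺(t)` is a bijection from `Ω` onto `ℝⁿ`. -/
def HbackRegr {n : ℕ} (T : Set ℝ) (Ω : Set (EuclideanSpace ℝ (Fin n)))
    (f : EuclideanSpace ℝ (Fin n) → ℝ → EuclideanSpace ℝ (Fin n)) : Prop :=
  ∀ t ∈ T, RightScattered T t → Set.BijOn (fun x => x + tsGrain T t • f x t) Ω univ

/-- Hypothesis (H^back_stab): `G⁻(t) : x ↦ x - μ(t) f(x,t)` maps `Ω` into `Ω`. -/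
def HbackStab {n : ℕ} (T : Set ℝ) (Ω : Set (EuclideanSpace ℝ (Fin n)))
    (f : EuclideanSpace ℝ (Fin n) → ℝ → EuclideanSpace ℝ (Fin n)) : Prop :=
  ∀ t ∈ T, RightScattered T t → ∀ x ∈ Ω, x - tsGrain T t • f x t ∈ Ω

/-- Hypothesis (H^forw_regr): `G⁻(t)` is a bijection from `Ω` onto `ℝⁿ`. -/
def HforwRegr {n : ℕ} (T : Set ℝ) (Ω : Set (EuclideanSpace ℝ (Fin n)))
    (f : EuclideanSpace ℝ (Fin n) → ℝ → EuclideanSpace ℝ (Fin n)) : Prop :=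
  ∀ t ∈ T, RightScattered T t → Set.BijOn (fun x => x - tsGrain T t • f x t) Ω univ

/-- Hypothesis (H^glob_Lip): global Lipschitz continuity. -/
def HglobLip {n : ℕ} (T : Set ℝ) (Ω : Set (EuclideanSpace ℝ (Fin n)))
    (f : EuclideanSpace ℝ (Fin n) → ℝ → EuclideanSpace ℝ (Fin n)) : Prop :=
  ∃ L : ℝ, 0 ≤ L ∧
    ∀ᵐ t ∂((deltaMeasure T).restrict (tsUpDomain T)),
      ∀ x₁ ∈ Ω, ∀ x₂ ∈ Ω, ‖f x₁ t - f x₂ t‖ ≤ L * ‖x₁ - x₂‖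

/-- The relation `a ⊴ t₀ ⊴ b`. -/
def Trile (T : Set ℝ) (t₀ a b : ℝ) : Prop :=
  (IsLeast T t₀ ∧ a = t₀ ∧ t₀ < b) ∨
  (IsGreatest T t₀ ∧ a < t₀ ∧ t₀ = b) ∨
  (¬ IsLeast T t₀ ∧ ¬ IsGreatest T t₀ ∧ a < t₀ ∧ t₀ < b)

/-- `(q, [a,b]_𝕋)` is a solution of the non shifted Δ-Cauchy problem (Δ-CP). -/
def IsSolIcc {n : ℕ} (T : Set ℝ) (Ω : Set (EuclideanSpace ℝ (Fin n)))
    (f : EuclideanSpace ℝ (Fin n) → ℝ → EuclideanSpace ℝ (Fin n))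
    (t₀ : ℝ) (q₀ : EuclideanSpace ℝ (Fin n))
    (q : ℝ → EuclideanSpace ℝ (Fin n)) (a b : ℝ) : Prop :=
  (∀ t ∈ Icc a b ∩ T, q t ∈ Ω) ∧ DeltaAC T a b q ∧ q t₀ = q₀ ∧
    ∀ᵐ t ∂((deltaMeasure T).restrict (Ico a b ∩ T)),
      HasDeltaDerivAt T q (f (q t) t) t

/-- `(q, [a,b]_𝕋)` is a solution of the shifted Δ-Cauchy problem (Δ-CP^σ). -/
def IsSolIccS {n : ℕ} (T : Set ℝ) (Ω : Set (EuclideanSpace ℝ (Fin n)))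
    (f : EuclideanSpace ℝ (Fin n) → ℝ → EuclideanSpace ℝ (Fin n))
    (t₀ : ℝ) (q₀ : EuclideanSpace ℝ (Fin n))
    (q : ℝ → EuclideanSpace ℝ (Fin n)) (a b : ℝ) : Prop :=
  (∀ t ∈ Icc a b ∩ T, q t ∈ Ω) ∧ DeltaAC T a b q ∧ q t₀ = q₀ ∧
    ∀ᵐ t ∂((deltaMeasure T).restrict (Ico a b ∩ T)),
      HasDeltaDerivAt T q (f (q (tsSigma T t)) t) t

/-- `I_𝕋 ∈ 𝕀`: `I` is a real interval containing points `a, b` of `T` with `a ⊴ t₀ ⊴ b`. -/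
def MemI (T : Set ℝ) (t₀ : ℝ) (I : Set ℝ) : Prop :=
  I.OrdConnected ∧ ∃ a ∈ I ∩ T, ∃ b ∈ I ∩ T, Trile T t₀ a b

/-- `(q, I_𝕋)` is a solution of (Δ-CP). -/
def IsSol {n : ℕ} (T : Set ℝ) (Ω : Set (EuclideanSpace ℝ (Fin n)))
    (f : EuclideanSpace ℝ (Fin n) → ℝ → EuclideanSpace ℝ (Fin n))
    (t₀ : ℝ) (q₀ : EuclideanSpace ℝ (Fin n))
    (q : ℝ → EuclideanSpace ℝ (Fin n)) (I : Set ℝ) : Prop :=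
  MemI T t₀ I ∧ (∀ t ∈ I ∩ T, q t ∈ Ω) ∧
    ∀ a ∈ I ∩ T, ∀ b ∈ I ∩ T, Trile T t₀ a b → IsSolIcc T Ω f t₀ q₀ q a b

/-- `(q, I_𝕋)` is a solution of (Δ-CP^σ). -/
def IsSolS {n : ℕ} (T : Set ℝ) (Ω : Set (EuclideanSpace ℝ (Fin n)))
    (f : EuclideanSpace ℝ (Fin n) → ℝ → EuclideanSpace ℝ (Fin n))
    (t₀ : ℝ) (q₀ : EuclideanSpace ℝ (Fin n))
    (q : ℝ → EuclideanSpace ℝ (Fin n)) (I : Set ℝ) : Prop :=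
  MemI T t₀ I ∧ (∀ t ∈ I ∩ T, q t ∈ Ω) ∧
    ∀ a ∈ I ∩ T, ∀ b ∈ I ∩ T, Trile T t₀ a b → IsSolIccS T Ω f t₀ q₀ q a b

/-- `(q₁, I₁_𝕋)` is an extension of `(q, I_𝕋)`. -/
def SolExtends {n : ℕ} (T : Set ℝ) (q₁ : ℝ → EuclideanSpace ℝ (Fin n)) (I₁ : Set ℝ)
    (q : ℝ → EuclideanSpace ℝ (Fin n)) (I : Set ℝ) : Prop :=
  I ∩ T ⊆ I₁ ∩ T ∧ EqOn q₁ q (I ∩ T)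

/-- `(q, I_𝕋)` is a maximal solution of (Δ-CP). -/
def IsMaxSol {n : ℕ} (T : Set ℝ) (Ω : Set (EuclideanSpace ℝ (Fin n)))
    (f : EuclideanSpace ℝ (Fin n) → ℝ → EuclideanSpace ℝ (Fin n))
    (t₀ : ℝ) (q₀ : EuclideanSpace ℝ (Fin n))
    (q : ℝ → EuclideanSpace ℝ (Fin n)) (I : Set ℝ) : Prop :=
  IsSol T Ω f t₀ q₀ q I ∧
    ∀ q₁ I₁, IsSol T Ω f t₀ q₀ q₁ I₁ → SolExtends T q₁ I₁ q I → I₁ ∩ T = I ∩ T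

/-- `(q, I_𝕋)` is a maximal solution of (Δ-CP^σ). -/
def IsMaxSolS {n : ℕ} (T : Set ℝ) (Ω : Set (EuclideanSpace ℝ (Fin n)))
    (f : EuclideanSpace ℝ (Fin n) → ℝ → EuclideanSpace ℝ (Fin n))
    (t₀ : ℝ) (q₀ : EuclideanSpace ℝ (Fin n))
    (q : ℝ → EuclideanSpace ℝ (Fin n)) (I : Set ℝ) : Prop :=
  IsSolS T Ω f t₀ q₀ q I ∧
    ∀ q₁ I₁, IsSolS T Ω f t₀ q₀ q₁ I₁ → SolExtends T q₁ I₁ q I → I₁ ∩ T = I ∩ T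


/-! ### Jump operators and one-sided projections onto the time scale -/

/-- The largest point of `T` not exceeding `s` (meaningful when `T` is closed and has such a
point). -/
def tsFloor (T : Set ℝ) (s : ℝ) : ℝ := sSup (T ∩ Iic s)

/-- The smallest point of `T` not below `s` (meaningful when `T` is closed and has such a
point). -/
def tsCeil (T : Set ℝ) (s : ℝ) : ℝ := sInf (T ∩ Ici s)

section Basics

variable {T : Set ℝ} {t₀ : ℝ}

lemma tsSigma_eq_of_ge (hmax : IsGreatest T t₀) {t : ℝ} (ht : t₀ ≤ t) : tsSigma T t = t := by
  unfold tsSigma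
  rw [if_neg]
  rintro ⟨s, hs, hts⟩
  have := hmax.2 hs
  linarith

lemma tsSigma_le {t s : ℝ} (hs : s ∈ T) (hts : t < s) : tsSigma T t ≤ s := by
  unfold tsSigma
  rw [if_pos ⟨s, hs, hts⟩]
  exact csInf_le ⟨t, fun x hx => hx.2.le⟩ ⟨hs, hts⟩

lemma le_tsSigma (T : Set ℝ) (t : ℝ) : t ≤ tsSigma T t := by
  unfold tsSigma
  split_ifs with h
  · exact le_csInf h fun x hx => hx.2.le
  · exact le_rfl

lemma tsSigma_mem (hT : IsClosed T) (hmax : IsGreatest T t₀) {t : ℝ} (ht : t < t₀) :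
    tsSigma T t ∈ T := by
  have hne : ({s | s ∈ T ∧ t < s}).Nonempty := ⟨t₀, hmax.1, ht⟩
  unfold tsSigma
  rw [if_pos hne]
  exact closure_minimal (fun x hx => hx.1) hT
    (csInf_mem_closure hne ⟨t, fun x hx => hx.2.le⟩)

lemma tsSigma_mono (hT : IsClosed T) (hmax : IsGreatest T t₀) : Monotone (tsSigma T) := by
  intro s t hst
  rcases lt_or_ge t t₀ with ht | ht
  · rcases lt_or_ge s (tsSigma T t) with h | h
    · exact tsSigma_le (tsSigma_mem hT hmax ht) h
    · have h1 := le_tsSigma T t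
      have : s = t := by linarith
      rw [this]
  · rw [tsSigma_eq_of_ge hmax ht]
    rcases lt_or_ge s t₀ with hs | hs
    · exact (tsSigma_le hmax.1 hs).trans ht
    · rw [tsSigma_eq_of_ge hmax hs]; exact hst

lemma lt_of_rightScattered (hmax : IsGreatest T t₀) {t : ℝ} (h : RightScattered T t) :
    t < t₀ := by
  by_contra hc
  have := tsSigma_eq_of_ge hmax (not_lt.1 hc)
  unfold RightScattered at h
  linarith

lemma tsFloor_mem (hT : IsClosed T) {a s : ℝ} (ha : a ∈ T) (has : a ≤ s) : tsFloor T s ∈ T :=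
  ((hT.inter isClosed_Iic).csSup_mem ⟨a, ha, has⟩ ⟨s, fun _ hx => hx.2⟩).1

lemma tsFloor_le {a s : ℝ} (ha : a ∈ T) (has : a ≤ s) : tsFloor T s ≤ s :=
  csSup_le ⟨a, ha, has⟩ fun _ hx => hx.2

lemma le_tsFloor {x s : ℝ} (hx : x ∈ T) (hxs : x ≤ s) : x ≤ tsFloor T s :=
  le_csSup ⟨s, fun _ hx => hx.2⟩ ⟨hx, hxs⟩

lemma tsFloor_self {s : ℝ} (hs : s ∈ T) : tsFloor T s = s :=
  le_antisymm (tsFloor_le hs le_rfl) (le_tsFloor hs le_rfl)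

lemma tsCeil_mem (hT : IsClosed T) {b s : ℝ} (hb : b ∈ T) (hsb : s ≤ b) : tsCeil T s ∈ T :=
  ((hT.inter isClosed_Ici).csInf_mem ⟨b, hb, hsb⟩ ⟨s, fun _ hx => hx.2⟩).1

lemma le_tsCeil {b s : ℝ} (hb : b ∈ T) (hsb : s ≤ b) : s ≤ tsCeil T s :=
  le_csInf ⟨b, hb, hsb⟩ fun _ hx => hx.2

lemma tsCeil_le {x s : ℝ} (hx : x ∈ T) (hsx : s ≤ x) : tsCeil T s ≤ x :=
  csInf_le ⟨s, fun _ hx => hx.2⟩ ⟨hx, hsx⟩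

lemma tsCeil_self {s : ℝ} (hs : s ∈ T) : tsCeil T s = s :=
  le_antisymm (tsCeil_le hs le_rfl) (le_tsCeil hs le_rfl)

/-- A point outside `T` lies in the gap whose left endpoint is its floor. -/
lemma tsFloor_lt (hT : IsClosed T) {a s : ℝ} (ha : a ∈ T) (has : a ≤ s)
    (hs : s ∉ T) : tsFloor T s < s :=
  lt_of_le_of_ne (tsFloor_le ha has) fun h => hs (h ▸ tsFloor_mem hT ha has)

lemma tsSigma_tsFloor (hT : IsClosed T) (hmax : IsGreatest T t₀) {a s : ℝ} (ha : a ∈ T)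
    (has : a ≤ s) (hst : s < t₀) (hs : s ∉ T) :
    tsSigma T (tsFloor T s) = tsCeil T s ∧ s < tsCeil T s := by
  have hfl := tsFloor_lt hT ha has hs
  have h1 : s < tsCeil T s :=
    lt_of_le_of_ne (le_tsCeil hmax.1 hst.le) fun h => hs (h ▸ tsCeil_mem hT hmax.1 hst.le)
  refine ⟨le_antisymm (tsSigma_le (tsCeil_mem hT hmax.1 hst.le) (hfl.trans h1)) ?_, h1⟩
  have h2 : tsSigma T (tsFloor T s) ∈ T := tsSigma_mem hT hmax (hfl.trans hst)
  refine tsCeil_le h2 ?_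
  by_contra hc
  have h3 := le_tsFloor h2 (not_le.1 hc).le
  have h4 := le_tsSigma T (tsFloor T s)
  have h5 : tsFloor T s = tsSigma T (tsFloor T s) := le_antisymm h4 h3
  -- a right-dense floor would be approached from the right by points of `T` below `s`
  have hne : ({x | x ∈ T ∧ tsFloor T s < x}).Nonempty := ⟨t₀, hmax.1, hfl.trans hst⟩
  have h6 : s ≤ tsSigma T (tsFloor T s) := by
    unfold tsSigma
    rw [if_pos hne]
    refine le_csInf hne fun x hx => ?_
    by_contra hxs
    have := le_tsFloor hx.1 (not_le.1 hxs).le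
    exact absurd hx.2 (not_lt.2 this)
  exact hc h6

lemma rightScattered_tsFloor (hT : IsClosed T) (hmax : IsGreatest T t₀) {a s : ℝ} (ha : a ∈ T)
    (has : a ≤ s) (hst : s < t₀) (hs : s ∉ T) : RightScattered T (tsFloor T s) := by
  have h := tsSigma_tsFloor hT hmax ha has hst hs
  unfold RightScattered
  rw [h.1]
  exact (tsFloor_lt hT ha has hs).trans h.2

lemma tsFloor_gap {r s : ℝ} (hr : r ∈ T) (hrs : r ≤ s) (hs : s < tsSigma T r) :
    tsFloor T s = r := by
  refine le_antisymm (csSup_le ⟨r, hr, hrs⟩ fun x hx => ?_) (le_tsFloor hr hrs)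
  by_contra h
  have := tsSigma_le hx.1 (not_le.1 h)
  have := hx.2
  simp only [mem_Iic] at this
  linarith

lemma tsSigma_gap (hT : IsClosed T) (hmax : IsGreatest T t₀) {r s : ℝ} (hrs : r ≤ s)
    (hs : s < tsSigma T r) : tsSigma T s = tsSigma T r := by
  have hr : r < t₀ := lt_of_rightScattered hmax (lt_of_le_of_lt hrs hs)
  exact le_antisymm (tsSigma_le (tsSigma_mem hT hmax hr) hs) (tsSigma_mono hT hmax hrs)

lemma tsSigma_mem_Icc (hT : IsClosed T) (hmax : IsGreatest T t₀) {a s : ℝ} (has : a ≤ s)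
    (hst : s < t₀) : tsSigma T s ∈ Icc a t₀ ∩ T :=
  ⟨⟨has.trans (le_tsSigma T s), tsSigma_le hmax.1 hst⟩, tsSigma_mem hT hmax hst⟩

lemma countable_rightScattered (T : Set ℝ) : {t : ℝ | t ∈ T ∧ RightScattered T t}.Countable := by
  refine Set.PairwiseDisjoint.countable_of_Ioo (y := tsSigma T) ?_ fun x hx => hx.2
  intro x hx y hy hxy
  refine Set.disjoint_left.2 fun z hzx hzy => ?_
  rcases lt_or_gt_of_ne hxy with h | h
  · have := tsSigma_le hy.1 h
    linarith [hzx.2, hzy.1]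
  · have := tsSigma_le hx.1 h
    linarith [hzy.2, hzx.1]

/-- A property holds Δ-a.e. on `A ⊆ T` iff it holds Lebesgue-a.e. on `A` and at *every*
right-scattered point of `A`, because those carry positive mass. -/
lemma ae_delta_iff {A : Set ℝ} (hA : MeasurableSet A) (hAT : A ⊆ T) (hT : IsClosed T)
    {P : ℝ → Prop} :
    (∀ᵐ t ∂((deltaMeasure T).restrict A), P t) ↔
      (∀ᵐ t, t ∈ A → P t) ∧ ∀ t ∈ A, RightScattered T t → P t := by
  have : Countable {t : ℝ // t ∈ T ∧ RightScattered T t} :=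
    (countable_rightScattered T).to_subtype
  rw [ae_restrict_iff' hA, deltaMeasure, ae_add_measure_iff, ae_restrict_iff' hT.measurableSet,
    Measure.ae_sum_iff]
  refine and_congr ⟨fun h => ?_, fun h => ?_⟩ ⟨fun h t ht hsc => ?_, fun h t => ?_⟩
  · filter_upwards [h] with t ht hA using ht (hAT hA) hA
  · filter_upwards [h] with t ht _ using ht
  · have h1 := h ⟨t, hAT ht, hsc⟩
    have hpos : ENNReal.ofReal (tsGrain T t) ≠ 0 := by
      have : t < tsSigma T t := hsc
      simp only [tsGrain, ne_eq, ENNReal.ofReal_eq_zero, not_le]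
      linarith
    rw [Measure.ae_ennreal_smul_measure_iff hpos, ae_dirac_eq] at h1
    exact h1 ht
  · refine Measure.ae_smul_measure ?_ _
    rw [ae_dirac_eq]
    exact fun ht => h t.1 ht t.2.2

/-- Δ-a.e. properties pull back along the floor map to Lebesgue-a.e. properties on the real
interval. -/
lemma ae_tsFloor (hT : IsClosed T) (hmax : IsGreatest T t₀) {a : ℝ} (ha : a ∈ T)
    {P : ℝ → Prop} (h : ∀ᵐ t ∂((deltaMeasure T).restrict (Ico a t₀ ∩ T)), P t) :
    ∀ᵐ s, s ∈ Ico a t₀ → P (tsFloor T s) := by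
  rw [ae_delta_iff (measurableSet_Ico.inter hT.measurableSet) inter_subset_right hT] at h
  filter_upwards [h.1] with s hs hsI
  by_cases hsT : s ∈ T
  · rw [tsFloor_self hsT]; exact hs ⟨hsI, hsT⟩
  · exact h.2 _ ⟨⟨le_tsFloor ha hsI.1, (tsFloor_lt hT ha hsI.1 hsT).trans hsI.2⟩,
      tsFloor_mem hT ha hsI.1⟩ (rightScattered_tsFloor hT hmax ha hsI.1 hsI.2 hsT)

end Basics


/-! ### The backward Volterra operator -/

/-- The real-line right-hand side obtained from `f` by freezing its time argument at the left
endpoint of each gap of `T`. -/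
def liftRhs {n : ℕ} (T : Set ℝ)
    (f : EuclideanSpace ℝ (Fin n) → ℝ → EuclideanSpace ℝ (Fin n))
    (x : EuclideanSpace ℝ (Fin n)) (s : ℝ) : EuclideanSpace ℝ (Fin n) :=
  f x (tsFloor T s)

/-- The backward Picard operator `p ↦ (u ↦ q₀ - ∫_u^{t₀} f(p(σ(s)), s) ds)`, with the Δ-integral
written as a Lebesgue integral over the real interval via `liftRhs`. -/
def picardOp {n : ℕ} (T : Set ℝ)
    (f : EuclideanSpace ℝ (Fin n) → ℝ → EuclideanSpace ℝ (Fin n))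
    (t₀ : ℝ) (q₀ : EuclideanSpace ℝ (Fin n)) (p : ℝ → EuclideanSpace ℝ (Fin n)) (u : ℝ) :
    EuclideanSpace ℝ (Fin n) :=
  q₀ - ∫ s in u..t₀, liftRhs T f (p (tsSigma T s)) s

/-- The Carathéodory, boundedness and Lipschitz hypotheses, transported to the real line. -/
structure LiftData {n : ℕ} (T : Set ℝ)
    (f : EuclideanSpace ℝ (Fin n) → ℝ → EuclideanSpace ℝ (Fin n)) (t₀ L : ℝ) : Prop where
  closed : IsClosed T
  isMax : IsGreatest T t₀
  nonneg : 0 ≤ L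
  meas : ∀ a ∈ T, a < t₀ → ∀ x,
    AEMeasurable (fun s => liftRhs T f x s) (volume.restrict (Ico a t₀))
  bound : ∀ a ∈ T, a < t₀ → ∀ R : ℝ, ∃ M : ℝ, 0 ≤ M ∧
    ∀ᵐ s, s ∈ Ico a t₀ → ∀ x, ‖x‖ ≤ R → ‖liftRhs T f x s‖ ≤ M
  lip : ∀ a ∈ T, a < t₀ →
    ∀ᵐ s, s ∈ Ico a t₀ → ∀ x y, ‖liftRhs T f x s - liftRhs T f y s‖ ≤ L * ‖x - y‖

section Volterra

variable {n : ℕ} {T : Set ℝ} {f : EuclideanSpace ℝ (Fin n) → ℝ → EuclideanSpace ℝ (Fin n)}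
  {t₀ L : ℝ}

lemma exists_liftData (hT : IsClosed T) (hmax : IsGreatest T t₀)
    (hf : DeltaCaratheodory T univ f) (hinf : HInfty T univ f) (hlip : HglobLip T univ f) :
    ∃ L, LiftData T f t₀ L := by
  obtain ⟨L, hL, hlip⟩ := hlip
  have hsub : ∀ a, Ico a t₀ ∩ T ⊆ tsUpDomain T := fun a t ht =>
    ⟨ht.2, fun h => absurd (h.2 hmax.1) (not_le.2 ht.1.2)⟩
  refine ⟨L, hT, hmax, hL, fun a ha hat x => ?_, fun a ha hat R => ?_, fun a ha hat => ?_⟩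
  · have hm := hf.1 x (mem_univ x)
    have hcount : Countable {t : ℝ // t ∈ T ∧ RightScattered T t} :=
      (countable_rightScattered T).to_subtype
    -- `[a, t₀)` is covered by its points in `T` and the countably many gaps
    have hcov : Ico a t₀ ⊆ (Ico a t₀ ∩ T) ∪
        ⋃ r : {t : ℝ // t ∈ T ∧ RightScattered T t}, Ico r.1 (tsSigma T r.1) := by
      intro s hs
      by_cases hsT : s ∈ T
      · exact Or.inl ⟨hs, hsT⟩
      · refine Or.inr (mem_iUnion.2 ⟨⟨tsFloor T s, tsFloor_mem hT ha hs.1,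
          rightScattered_tsFloor hT hmax ha hs.1 hs.2 hsT⟩, tsFloor_le ha hs.1, ?_⟩)
        have h := tsSigma_tsFloor hT hmax ha hs.1 hs.2 hsT
        simpa only [h.1] using h.2
    refine AEMeasurable.mono_measure ?_ (Measure.restrict_mono hcov le_rfl)
    rw [aemeasurable_union_iff, aemeasurable_iUnion_iff]
    refine ⟨?_, fun r => ?_⟩
    · have h1 : AEMeasurable (fun t => f x t) (volume.restrict (Ico a t₀ ∩ T)) := by
        refine hm.mono_measure ?_
        have h2 : volume.restrict (Ico a t₀ ∩ T) =
            (volume.restrict T).restrict (Ico a t₀ ∩ T) := by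
          rw [Measure.restrict_restrict (measurableSet_Ico.inter hT.measurableSet),
            inter_assoc, inter_self]
        rw [h2]
        exact Measure.restrict_mono (hsub a) (Measure.le_add_right le_rfl)
      refine h1.congr ?_
      refine (ae_restrict_iff' (measurableSet_Ico.inter hT.measurableSet)).2
        (Eventually.of_forall fun s hs => ?_)
      simp only [liftRhs, tsFloor_self hs.2]
    · refine (aemeasurable_const (b := f x r.1)).congr ?_
      refine (ae_restrict_iff' measurableSet_Ico).2 (Eventually.of_forall fun s hs => ?_)
      simp only [liftRhs, tsFloor_gap r.2.1 hs.1 hs.2]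
  · obtain ⟨M, hM, h⟩ := hinf (Metric.closedBall 0 R) (subset_univ _)
      (isCompact_closedBall 0 R) a ha t₀ hmax.1 hat
    refine ⟨M, hM, ?_⟩
    filter_upwards [ae_tsFloor hT hmax ha h] with s hs hsI x hx
    exact hs hsI x (by simpa using hx)
  · have h : ∀ᵐ t ∂((deltaMeasure T).restrict (Ico a t₀ ∩ T)),
        ∀ x₁ ∈ univ, ∀ x₂ ∈ univ, ‖f x₁ t - f x₂ t‖ ≤ L * ‖x₁ - x₂‖ :=
      ae_restrict_of_ae_restrict_of_subset (hsub a) hlip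
    filter_upwards [ae_tsFloor hT hmax ha h] with s hs hsI x y
    exact hs hsI x (mem_univ x) y (mem_univ y)

variable {a : ℝ} {q₀ : EuclideanSpace ℝ (Fin n)} {p p₁ p₂ : ℝ → EuclideanSpace ℝ (Fin n)}

lemma LiftData.isCompact (H : LiftData T f t₀ L) (a : ℝ) : IsCompact (Icc a t₀ ∩ T) :=
  isCompact_Icc.inter_right H.closed

lemma ae_ne_real (c : ℝ) : ∀ᵐ s : ℝ, s ≠ c := by
  simp [ae_iff, measure_singleton]

/-- The integrand of the Picard operator is measurable: approximate `p ∘ σ` by simple functions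
and pass to the limit using continuity in the state variable. -/
lemma LiftData.aemeasurable_comp (H : LiftData T f t₀ L) (ha : a ∈ T) (hat : a < t₀)
    (hp : ContinuousOn p (Icc a t₀ ∩ T)) :
    AEMeasurable (fun s => liftRhs T f (p (tsSigma T s)) s) (volume.restrict (Ico a t₀)) := by
  have hS : MeasurableSet (Icc a t₀ ∩ T) := measurableSet_Icc.inter H.closed.measurableSet
  have hP : Measurable ((Icc a t₀ ∩ T).piecewise p 0) :=
    hp.measurable_piecewise continuousOn_const hS
  set y : ℝ → EuclideanSpace ℝ (Fin n) :=
    fun s => (Icc a t₀ ∩ T).piecewise p 0 (tsSigma T s) with hy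
  have hym : Measurable y := hP.comp (tsSigma_mono H.closed H.isMax).measurable
  have hys : ∀ s ∈ Ico a t₀, y s = p (tsSigma T s) := fun s hs =>
    piecewise_eq_of_mem _ _ _ (tsSigma_mem_Icc H.closed H.isMax hs.1 hs.2)
  have hysm := hym.stronglyMeasurable
  have hm := H.meas a ha hat
  have hsimple : ∀ φ : SimpleFunc ℝ (EuclideanSpace ℝ (Fin n)),
      AEMeasurable (fun s => liftRhs T f (φ s) s) (volume.restrict (Ico a t₀)) := by
    intro φ
    refine ⟨fun s => (hm (φ s)).mk _ s,
      φ.measurable_bind (fun x s => (hm x).mk _ s) fun x => (hm x).measurable_mk, ?_⟩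
    have h1 : ∀ᵐ s ∂(volume.restrict (Ico a t₀)), ∀ x ∈ Set.range φ,
        liftRhs T f x s = (hm x).mk _ s :=
      (ae_ball_iff φ.finite_range.countable).2 fun x _ => (hm x).ae_eq_mk
    filter_upwards [h1] with s hs using hs _ (mem_range_self s)
  refine aemeasurable_of_tendsto_metrizable_ae atTop (fun k => hsimple (hysm.approx k)) ?_
  rw [ae_restrict_iff' measurableSet_Ico]
  filter_upwards [H.lip a ha hat] with s hs hsI
  have hlim := hysm.tendsto_approx s
  rw [tendsto_iff_norm_sub_tendsto_zero] at hlim ⊢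
  have h2 := hlim.const_mul L
  rw [mul_zero] at h2
  refine squeeze_zero (fun k => norm_nonneg _) (fun k => ?_) h2
  rw [← hys s hsI]
  exact hs hsI _ _

/-- On each `[a, t₀]` the integrand of the Picard operator is integrable and essentially
bounded. -/
lemma LiftData.integrable_comp (H : LiftData T f t₀ L) (ha : a ∈ T) (hat : a < t₀)
    (hp : ContinuousOn p (Icc a t₀ ∩ T)) :
    IntervalIntegrable (fun s => liftRhs T f (p (tsSigma T s)) s) volume a t₀ ∧
      ∃ M, 0 ≤ M ∧ ∀ᵐ s, s ∈ Ico a t₀ → ‖liftRhs T f (p (tsSigma T s)) s‖ ≤ M := by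
  obtain ⟨R, hR⟩ := (H.isCompact a).exists_bound_of_continuousOn hp
  obtain ⟨M, hM, hb⟩ := H.bound a ha hat R
  have hb' : ∀ᵐ s, s ∈ Ico a t₀ → ‖liftRhs T f (p (tsSigma T s)) s‖ ≤ M := by
    filter_upwards [hb] with s hs hsI
    exact hs hsI _ (hR _ (tsSigma_mem_Icc H.closed H.isMax hsI.1 hsI.2))
  refine ⟨?_, M, hM, hb'⟩
  rw [intervalIntegrable_iff_integrableOn_Ico_of_le hat.le]
  exact Integrable.of_bound (H.aemeasurable_comp ha hat hp).aestronglyMeasurable M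
    ((ae_restrict_iff' measurableSet_Ico).2 hb')

lemma LiftData.integrable_sub (H : LiftData T f t₀ L) (ha : a ∈ T) (hat : a < t₀)
    (hp : ContinuousOn p (Icc a t₀ ∩ T)) {u v : ℝ} (hu : u ∈ Icc a t₀) (hv : v ∈ Icc a t₀) :
    IntervalIntegrable (fun s => liftRhs T f (p (tsSigma T s)) s) volume u v := by
  refine (H.integrable_comp ha hat hp).1.mono_set ?_
  rw [uIcc_of_le hat.le]
  exact uIcc_subset_Icc hu hv

lemma LiftData.picardOp_sub (H : LiftData T f t₀ L) (ha : a ∈ T) (hat : a < t₀)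
    (hp : ContinuousOn p (Icc a t₀ ∩ T)) {u v : ℝ} (hu : u ∈ Icc a t₀) (hv : v ∈ Icc a t₀) :
    picardOp T f t₀ q₀ p v - picardOp T f t₀ q₀ p u =
      ∫ s in u..v, liftRhs T f (p (tsSigma T s)) s := by
  have h := intervalIntegral.integral_add_adjacent_intervals (H.integrable_sub ha hat hp hu hv)
    (H.integrable_sub ha hat hp hv (right_mem_Icc.2 hat.le))
  unfold picardOp
  rw [← h]
  abel

lemma LiftData.picardOp_lipschitz (H : LiftData T f t₀ L) (ha : a ∈ T) (hat : a < t₀)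
    (hp : ContinuousOn p (Icc a t₀ ∩ T)) :
    ∃ M, 0 ≤ M ∧ ∀ u ∈ Icc a t₀, ∀ v ∈ Icc a t₀,
      ‖picardOp T f t₀ q₀ p v - picardOp T f t₀ q₀ p u‖ ≤ M * |v - u| := by
  obtain ⟨-, M, hM, hb⟩ := H.integrable_comp ha hat hp
  refine ⟨M, hM, fun u hu v hv => ?_⟩
  rw [H.picardOp_sub ha hat hp hu hv]
  refine intervalIntegral.norm_integral_le_of_norm_le_const_ae ?_
  filter_upwards [hb, ae_ne_real t₀] with s hs hne hsI
  have h1 := uIoc_subset_uIcc hsI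
  have h2 := uIcc_subset_Icc hu hv h1
  exact hs ⟨h2.1, lt_of_le_of_ne h2.2 hne⟩

lemma LiftData.continuousOn_picardOp (H : LiftData T f t₀ L) (ha : a ∈ T) (hat : a < t₀)
    (hp : ContinuousOn p (Icc a t₀ ∩ T)) :
    ContinuousOn (picardOp T f t₀ q₀ p) (Icc a t₀) := by
  obtain ⟨M, hM, h⟩ := H.picardOp_lipschitz (q₀ := q₀) ha hat hp
  refine (LipschitzOnWith.of_dist_le_mul (K := M.toNNReal) fun x hx y hy => ?_).continuousOn
  rw [dist_eq_norm, Real.dist_eq, Real.coe_toNNReal _ hM]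
  exact h y hy x hx

/-- The Picard operator halves distances in the norm weighted by `exp((2L+1)(t₀ - u))`.  Since
`σ(s) ≥ s`, the weight at `σ(s)` is at most the weight at `s`, so the shift costs nothing. -/
lemma LiftData.contraction (H : LiftData T f t₀ L) (ha : a ∈ T) (hat : a < t₀)
    (hp₁ : ContinuousOn p₁ (Icc a t₀ ∩ T)) (hp₂ : ContinuousOn p₂ (Icc a t₀ ∩ T))
    {D : ℝ} (hD : 0 ≤ D)
    (h : ∀ u ∈ Icc a t₀ ∩ T, ‖p₁ u - p₂ u‖ ≤ D * Real.exp ((2 * L + 1) * (t₀ - u)))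
    {u : ℝ} (hu : u ∈ Icc a t₀) :
    ‖picardOp T f t₀ q₀ p₁ u - picardOp T f t₀ q₀ p₂ u‖ ≤
      D / 2 * Real.exp ((2 * L + 1) * (t₀ - u)) := by
  have hL := H.nonneg
  have hK : 0 < 2 * L + 1 := by linarith
  have ht₀ : t₀ ∈ Icc a t₀ := right_mem_Icc.2 hat.le
  have e1 : picardOp T f t₀ q₀ p₁ u - picardOp T f t₀ q₀ p₂ u =
      ∫ s in u..t₀, (liftRhs T f (p₂ (tsSigma T s)) s - liftRhs T f (p₁ (tsSigma T s)) s) := by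
    rw [intervalIntegral.integral_sub (H.integrable_sub ha hat hp₂ hu ht₀)
      (H.integrable_sub ha hat hp₁ hu ht₀)]
    unfold picardOp
    abel
  have hcont : Continuous fun s : ℝ => L * D * Real.exp ((2 * L + 1) * (t₀ - s)) := by fun_prop
  have e2 : ∫ s in u..t₀, L * D * Real.exp ((2 * L + 1) * (t₀ - s)) =
      -(L * D / (2 * L + 1)) * Real.exp ((2 * L + 1) * (t₀ - t₀)) -
        -(L * D / (2 * L + 1)) * Real.exp ((2 * L + 1) * (t₀ - u)) := by
    refine intervalIntegral.integral_eq_sub_of_hasDerivAt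
      (f := fun s => -(L * D / (2 * L + 1)) * Real.exp ((2 * L + 1) * (t₀ - s)))
      (fun s _ => ?_) (hcont.intervalIntegrable _ _)
    have := ((((hasDerivAt_id s).const_sub t₀).const_mul (2 * L + 1)).exp).const_mul
      (-(L * D / (2 * L + 1)))
    convert! this using 1
    simp only [id]
    field_simp
  rw [e1]
  refine (intervalIntegral.norm_integral_le_of_norm_le hu.2 ?_
    (hcont.intervalIntegrable u t₀)).trans ?_
  · filter_upwards [H.lip a ha hat, ae_ne_real t₀] with s hs hne hsI
    have hsI' : s ∈ Ico a t₀ := ⟨hu.1.trans hsI.1.le, lt_of_le_of_ne hsI.2 hne⟩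
    have h1 := hs hsI' (p₂ (tsSigma T s)) (p₁ (tsSigma T s))
    have h2 := h _ (tsSigma_mem_Icc H.closed H.isMax hsI'.1 hsI'.2)
    rw [norm_sub_rev] at h2
    have h3 : Real.exp ((2 * L + 1) * (t₀ - tsSigma T s)) ≤
        Real.exp ((2 * L + 1) * (t₀ - s)) := by
      have := le_tsSigma T s
      gcongr
    calc _ ≤ L * ‖p₂ (tsSigma T s) - p₁ (tsSigma T s)‖ := h1
      _ ≤ L * (D * Real.exp ((2 * L + 1) * (t₀ - s))) := by
        gcongr
        exact h2.trans (by gcongr)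
      _ = _ := by ring
  · rw [e2]
    have h4 : L * D / (2 * L + 1) ≤ D / 2 := by
      rw [div_le_div_iff₀ hK two_pos]
      nlinarith
    have h5 : 0 ≤ L * D / (2 * L + 1) := by positivity
    have h6 := Real.exp_pos ((2 * L + 1) * (t₀ - u))
    have h7 := Real.exp_pos ((2 * L + 1) * (t₀ - t₀))
    nlinarith

/-- A continuous function on the compact `[a, t₀]_T` is bounded by a multiple of the weight. -/
lemma LiftData.exists_weight_bound (H : LiftData T f t₀ L)
    (hp : ContinuousOn p (Icc a t₀ ∩ T)) :
    ∃ D, 0 ≤ D ∧ ∀ u ∈ Icc a t₀ ∩ T, ‖p u‖ ≤ D * Real.exp ((2 * L + 1) * (t₀ - u)) := by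
  have hL := H.nonneg
  obtain ⟨R, hR⟩ := (H.isCompact a).exists_bound_of_continuousOn hp
  refine ⟨max R 0, le_max_right _ _, fun u hu => ?_⟩
  have h1 : 1 ≤ Real.exp ((2 * L + 1) * (t₀ - u)) :=
    Real.one_le_exp (mul_nonneg (by linarith) (by linarith [hu.1.2]))
  calc ‖p u‖ ≤ max R 0 * 1 := by rw [mul_one]; exact (hR u hu).trans (le_max_left _ _)
    _ ≤ _ := by gcongr

lemma LiftData.unique (H : LiftData T f t₀ L) (ha : a ∈ T) (hat : a < t₀)
    (hp₁ : ContinuousOn p₁ (Icc a t₀ ∩ T)) (hp₂ : ContinuousOn p₂ (Icc a t₀ ∩ T))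
    (h₁ : ∀ u ∈ Icc a t₀ ∩ T, p₁ u = picardOp T f t₀ q₀ p₁ u)
    (h₂ : ∀ u ∈ Icc a t₀ ∩ T, p₂ u = picardOp T f t₀ q₀ p₂ u) :
    EqOn p₁ p₂ (Icc a t₀ ∩ T) := by
  obtain ⟨D, hD, hb⟩ := H.exists_weight_bound (hp₁.sub hp₂)
  have hk : ∀ k : ℕ, ∀ u ∈ Icc a t₀ ∩ T,
      ‖p₁ u - p₂ u‖ ≤ D * (1 / 2) ^ k * Real.exp ((2 * L + 1) * (t₀ - u)) := by
    intro k
    induction k with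
    | zero => simpa using hb
    | succ k ih =>
      intro u hu
      rw [h₁ u hu, h₂ u hu]
      refine (H.contraction ha hat hp₁ hp₂ (by positivity) ih hu.1).trans (le_of_eq ?_)
      ring
  intro u hu
  rw [← sub_eq_zero, ← norm_le_zero_iff]
  have hlim : Tendsto (fun k : ℕ => D * (1 / 2 : ℝ) ^ k * Real.exp ((2 * L + 1) * (t₀ - u)))
      atTop (nhds (D * 0 * Real.exp ((2 * L + 1) * (t₀ - u)))) :=
    ((tendsto_pow_atTop_nhds_zero_of_lt_one (by norm_num) (by norm_num)).const_mul D).mul_const _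
  rw [mul_zero, zero_mul] at hlim
  exact ge_of_tendsto' hlim fun k => hk k u hu

/-- A fixed point of the Picard operator on all of `T`, as the limit of the Picard iterates: the
weighted estimate on each `[a, t₀]_T` makes the iterates converge uniformly there. -/
lemma LiftData.exists_fixed (H : LiftData T f t₀ L) (q₀ : EuclideanSpace ℝ (Fin n)) :
    ∃ q : ℝ → EuclideanSpace ℝ (Fin n), ∀ a ∈ T, a < t₀ →
      ContinuousOn q (Icc a t₀ ∩ T) ∧
      ∀ u ∈ Icc a t₀ ∩ T, q u = picardOp T f t₀ q₀ q u := by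
  have hL := H.nonneg
  set w : ℝ → ℝ := fun u => Real.exp ((2 * L + 1) * (t₀ - u)) with hw
  have hwpos : ∀ u, 0 < w u := fun u => Real.exp_pos _
  let x : ℕ → ℝ → EuclideanSpace ℝ (Fin n) := fun k => (picardOp T f t₀ q₀)^[k] fun _ => q₀
  have hxs : ∀ k, x (k + 1) = picardOp T f t₀ q₀ (x k) := fun k =>
    Function.iterate_succ_apply' _ _ _
  have hxc : ∀ k, ∀ a ∈ T, a < t₀ → ContinuousOn (x k) (Icc a t₀ ∩ T) := by
    intro k
    induction k with
    | zero => exact fun a _ _ => continuousOn_const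
    | succ k ih =>
      intro a ha hat
      rw [hxs]
      exact (H.continuousOn_picardOp ha hat (ih a ha hat)).mono inter_subset_left
  refine ⟨fun u => limUnder atTop fun k => x k u, fun a ha hat => ?_⟩
  obtain ⟨D, hD, hb⟩ := H.exists_weight_bound ((hxc 0 a ha hat).sub (hxc 1 a ha hat))
  have hstep : ∀ k, ∀ u ∈ Icc a t₀ ∩ T, ‖x k u - x (k + 1) u‖ ≤ D * (1 / 2) ^ k * w u := by
    intro k
    induction k with
    | zero => simpa using hb
    | succ k ih =>
      intro u hu
      have := H.contraction (q₀ := q₀) ha hat (hxc k a ha hat) (hxc (k + 1) a ha hat)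
        (by positivity) ih hu.1
      rw [← hxs, ← hxs] at this
      exact this.trans (le_of_eq (by ring))
  have hstep' : ∀ u ∈ Icc a t₀ ∩ T, ∀ k,
      dist (x k u) (x (k + 1) u) ≤ D * w u * (1 / 2) ^ k := fun u hu k => by
    rw [dist_eq_norm]
    exact (hstep k u hu).trans (le_of_eq (by ring))
  have hlim : ∀ u ∈ Icc a t₀ ∩ T,
      Tendsto (fun k => x k u) atTop (nhds (limUnder atTop fun k => x k u)) := fun u hu =>
    (cauchySeq_of_le_geometric _ _ (by norm_num) (hstep' u hu)).tendsto_limUnder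
  have hest : ∀ k, ∀ u ∈ Icc a t₀ ∩ T,
      ‖x k u - limUnder atTop fun k => x k u‖ ≤ 2 * D * (1 / 2) ^ k * w u := fun k u hu => by
    rw [← dist_eq_norm]
    refine (dist_le_of_le_geometric_of_tendsto _ _ (by norm_num) (hstep' u hu) (hlim u hu)
      k).trans (le_of_eq ?_)
    ring
  have hgeo : ∀ c d : ℝ, Tendsto (fun k : ℕ => c * (1 / 2 : ℝ) ^ k * d) atTop (nhds 0) := by
    intro c d
    have := ((tendsto_pow_atTop_nhds_zero_of_lt_one (r := (1 / 2 : ℝ)) (by norm_num)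
      (by norm_num)).const_mul c).mul_const d
    simpa using this
  have hcont : ContinuousOn (fun u => limUnder atTop fun k => x k u) (Icc a t₀ ∩ T) := by
    refine TendstoUniformlyOn.continuousOn (F := x) (p := atTop) ?_
      (Eventually.frequently (Eventually.of_forall fun k => hxc k a ha hat))
    rw [Metric.tendstoUniformlyOn_iff]
    intro ε hε
    filter_upwards [(hgeo (2 * D) (w a)).eventually (gt_mem_nhds hε)] with k hk u hu
    rw [dist_comm, dist_eq_norm]
    refine ((hest k u hu).trans ?_).trans_lt hk
    have : w u ≤ w a := by
      have := hu.1.1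
      simp only [hw]
      gcongr
    gcongr
  refine ⟨hcont, fun u hu => ?_⟩
  refine tendsto_nhds_unique ((tendsto_add_atTop_iff_nat 1).2 (hlim u hu)) ?_
  rw [tendsto_iff_norm_sub_tendsto_zero]
  refine squeeze_zero (fun k => norm_nonneg _) (fun k => ?_) (hgeo D (w u))
  rw [hxs]
  refine (H.contraction ha hat (hxc k a ha hat) hcont (by positivity) (hest k) hu.1).trans
    (le_of_eq ?_)
  simp only [hw]
  ring

end Volterra


/-! ### Absolute continuity and vanishing Δ-derivative -/

section AbsCont

variable {n : ℕ} {T : Set ℝ} {t₀ a b : ℝ} {r q : ℝ → EuclideanSpace ℝ (Fin n)}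

/-- `DeltaAC` for families indexed by an arbitrary finite set. -/
lemma DeltaAC.finset (h : DeltaAC T a b r) {ε : ℝ} (hε : 0 < ε) :
    ∃ δ > (0 : ℝ), ∀ (s : Finset ℕ) (u v : ℕ → ℝ),
      (∀ k ∈ s, u k ∈ Icc a b ∩ T) → (∀ k ∈ s, v k ∈ Icc a b ∩ T) →
      (∀ k ∈ s, u k ≤ v k) →
      (∀ i ∈ s, ∀ j ∈ s, i ≠ j → Disjoint (Icc (u i) (v i)) (Icc (u j) (v j))) →
      (∑ k ∈ s, (v k - u k)) < δ → (∑ k ∈ s, ‖r (v k) - r (u k)‖) < ε := by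
  obtain ⟨δ, hδ, hd⟩ := h ε hε
  refine ⟨δ, hδ, fun s u v hu hv huv hdis hsum => ?_⟩
  set e := s.equivFin.symm with he
  let φ : ℕ → ℕ := fun k => if h : k < s.card then (e ⟨k, h⟩ : ℕ) else 0
  have hφ : ∀ k, ∀ h : k < s.card, φ k = (e ⟨k, h⟩ : ℕ) := fun k h => dif_pos h
  have hmem : ∀ k < s.card, φ k ∈ s := fun k h => by rw [hφ k h]; exact (e ⟨k, h⟩).2
  have hs : ∀ g : ℕ → ℝ, ∑ k ∈ Finset.range s.card, g (φ k) = ∑ k ∈ s, g k := by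
    intro g
    rw [Finset.sum_range, ← Finset.sum_coe_sort s g, ← Equiv.sum_comp e]
    exact Finset.sum_congr rfl fun i _ => by rw [hφ i i.2]
  have := hd s.card (fun k => u (φ k)) (fun k => v (φ k)) (fun k hk => hu _ (hmem k hk))
    (fun k hk => hv _ (hmem k hk)) (fun k hk => huv _ (hmem k hk))
    (fun i hi j hj hij => hdis _ (hmem i hi) _ (hmem j hj) fun hc => hij ?_)
    (by rw [hs fun k => v k - u k]; exact hsum)
  · rwa [hs fun k => ‖r (v k) - r (u k)‖] at this
  · rw [hφ i hi, hφ j hj] at hc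
    have := e.injective (Subtype.ext hc)
    simpa using this

lemma DeltaAC.continuousOn (h : DeltaAC T a b r) : ContinuousOn r (Icc a b ∩ T) := by
  rw [Metric.continuousOn_iff]
  intro x hx ε hε
  obtain ⟨δ, hδ, hd⟩ := h ε hε
  have key : ∀ u ∈ Icc a b ∩ T, ∀ v ∈ Icc a b ∩ T, u ≤ v → v - u < δ → ‖r v - r u‖ < ε := by
    intro u hu v hv huv hlt
    have := hd 1 (fun _ => u) (fun _ => v) (fun _ _ => hu) (fun _ _ => hv) (fun _ _ => huv)
      (fun i hi j hj hij => absurd (by omega) hij) (by simpa using hlt)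
    simpa using this
  refine ⟨δ, hδ, fun y hy hxy => ?_⟩
  rw [Real.dist_eq] at hxy
  rcases le_total x y with hle | hle
  · rw [dist_eq_norm]
    exact key x hx y hy hle (by rwa [abs_of_nonneg (by linarith)] at hxy)
  · rw [dist_comm, dist_eq_norm]
    exact key y hy x hx hle (by rw [abs_of_nonpos (by linarith)] at hxy; linarith)

lemma deltaAC_of_lipschitz {M : ℝ} (hM : 0 ≤ M)
    (h : ∀ u ∈ Icc a b ∩ T, ∀ v ∈ Icc a b ∩ T, ‖r v - r u‖ ≤ M * |v - u|) :
    DeltaAC T a b r := by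
  intro ε hε
  refine ⟨ε / (M + 1), by positivity, fun m u v hu hv huv _ hsum => ?_⟩
  have h1 : ∑ k ∈ Finset.range m, ‖r (v k) - r (u k)‖ ≤
      M * ∑ k ∈ Finset.range m, (v k - u k) := by
    rw [Finset.mul_sum]
    refine Finset.sum_le_sum fun k hk => ?_
    rw [Finset.mem_range] at hk
    have := h _ (hu k hk) _ (hv k hk)
    rwa [abs_of_nonneg (by linarith [huv k hk])] at this
  refine h1.trans_lt ?_
  have h2 : 0 ≤ ∑ k ∈ Finset.range m, (v k - u k) :=
    Finset.sum_nonneg fun k hk => by linarith [huv k (Finset.mem_range.1 hk)]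
  rw [lt_div_iff₀ (by positivity)] at hsum
  nlinarith

lemma DeltaAC.sub (h : DeltaAC T a b r) (h' : DeltaAC T a b q) :
    DeltaAC T a b (fun t => r t - q t) := by
  intro ε hε
  obtain ⟨δ₁, hδ₁, h₁⟩ := h (ε / 2) (by positivity)
  obtain ⟨δ₂, hδ₂, h₂⟩ := h' (ε / 2) (by positivity)
  refine ⟨min δ₁ δ₂, lt_min hδ₁ hδ₂, fun m u v hu hv huv hdis hsum => ?_⟩
  have e₁ := h₁ m u v hu hv huv hdis (hsum.trans_le (min_le_left _ _))
  have e₂ := h₂ m u v hu hv huv hdis (hsum.trans_le (min_le_right _ _))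
  have e₃ : ∑ k ∈ Finset.range m, ‖(r (v k) - q (v k)) - (r (u k) - q (u k))‖ ≤
      ∑ k ∈ Finset.range m, (‖r (v k) - r (u k)‖ + ‖q (v k) - q (u k)‖) :=
    Finset.sum_le_sum fun k _ => by
      rw [sub_sub_sub_comm]
      exact norm_sub_le _ _
  rw [Finset.sum_add_distrib] at e₃
  linarith

/-- It is enough to test absolute continuity on families of disjoint *closed* intervals: abutting
intervals are separated by shrinking them from the left and letting the shrinkage tend to `0`. -/
lemma absolutelyContinuousOnInterval_of_closed (hab : a ≤ b)
    (h : ∀ ε > (0 : ℝ), ∃ δ > (0 : ℝ), ∀ (s : Finset ℕ) (u v : ℕ → ℝ),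
      (∀ k ∈ s, u k ∈ Icc a b) → (∀ k ∈ s, v k ∈ Icc a b) → (∀ k ∈ s, u k ≤ v k) →
      (∀ i ∈ s, ∀ j ∈ s, i ≠ j → Disjoint (Icc (u i) (v i)) (Icc (u j) (v j))) →
      (∑ k ∈ s, (v k - u k)) < δ → (∑ k ∈ s, ‖r (v k) - r (u k)‖) < ε) :
    AbsolutelyContinuousOnInterval r a b := by
  have hcont : ContinuousOn r (Icc a b) := by
    have : DeltaAC univ a b r := by
      intro ε hε
      obtain ⟨δ, hδ, hd⟩ := h ε hε
      refine ⟨δ, hδ, fun m u v hu hv huv hdis => ?_⟩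
      refine hd (Finset.range m) u v (fun k hk => (hu k (Finset.mem_range.1 hk)).1)
        (fun k hk => (hv k (Finset.mem_range.1 hk)).1) (fun k hk => huv k (Finset.mem_range.1 hk))
        (fun i hi j hj => hdis i (Finset.mem_range.1 hi) j (Finset.mem_range.1 hj))
    simpa using this.continuousOn
  rw [absolutelyContinuousOnInterval_iff]
  intro ε hε
  obtain ⟨δ, hδ, hd⟩ := h (ε / 2) (by positivity)
  refine ⟨δ, hδ, fun ⟨m, I⟩ ⟨hI, hdis⟩ hsum => ?_⟩
  simp only at hI hdis hsum ⊢
  rw [uIcc_of_le hab] at hI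
  set u : ℕ → ℝ := fun k => min (I k).1 (I k).2 with hu
  set v : ℕ → ℝ := fun k => max (I k).1 (I k).2 with hv
  have hdu : ∀ k, dist (I k).1 (I k).2 = v k - u k := fun k => by
    rw [Real.dist_eq, hu, hv, max_sub_min_eq_abs']
  have hdr : ∀ k, dist (r (I k).1) (r (I k).2) = ‖r (v k) - r (u k)‖ := fun k => by
    simp only [hu, hv]
    rcases le_total (I k).1 (I k).2 with hk | hk
    · rw [max_eq_right hk, min_eq_left hk, dist_comm, dist_eq_norm]
    · rw [max_eq_left hk, min_eq_right hk, dist_eq_norm]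
  have huv : ∀ k, u k ≤ v k := fun k => min_le_max
  set s := (Finset.range m).filter fun k => u k < v k with hs
  have hsm : ∀ k ∈ s, k ∈ Finset.range m ∧ u k < v k := fun k hk => Finset.mem_filter.1 hk
  have huI : ∀ k ∈ s, u k ∈ Icc a b := fun k hk => by
    have := hI k (hsm k hk).1
    exact ⟨le_min this.1.1 this.2.1, (min_le_left _ _).trans this.1.2⟩
  have hvI : ∀ k ∈ s, v k ∈ Icc a b := fun k hk => by
    have := hI k (hsm k hk).1
    exact ⟨this.1.1.trans (le_max_left _ _), max_le this.1.2 this.2.2⟩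
  have hsum' : ∑ k ∈ s, (v k - u k) < δ := by
    refine lt_of_le_of_lt ?_ hsum
    simp only [hdu]
    exact Finset.sum_le_sum_of_subset_of_nonneg (Finset.filter_subset _ _)
      fun k _ _ => by linarith [huv k]
  have hshrink : ∀ᶠ η in nhdsWithin (0 : ℝ) (Ioi 0),
      ∑ k ∈ s, ‖r (v k) - r (u k + η)‖ ≤ ε / 2 := by
    have hη : ∀ᶠ η in nhdsWithin (0 : ℝ) (Ioi 0), ∀ k ∈ s, η < v k - u k := by
      rw [Filter.eventually_all_finset]
      intro k hk
      exact nhdsWithin_le_nhds (gt_mem_nhds (sub_pos.2 (hsm k hk).2))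
    filter_upwards [hη, self_mem_nhdsWithin] with η hη hpos
    rw [mem_Ioi] at hpos
    refine (hd s (fun k => u k + η) v
      (fun k hk => ⟨by linarith [(huI k hk).1], by linarith [hη k hk, (hvI k hk).2]⟩) hvI
      (fun k hk => by linarith [hη k hk]) (fun i hi j hj hij => ?_) ?_).le
    · have := hdis (hsm i hi).1 (hsm j hj).1 hij
      refine Disjoint.mono ?_ ?_ this
      · exact fun x hx => ⟨by change u i < x; linarith [hx.1], hx.2⟩
      · exact fun x hx => ⟨by change u j < x; linarith [hx.1], hx.2⟩
    · exact lt_of_le_of_lt (Finset.sum_le_sum fun k _ => by linarith) hsum'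
  have hlim : Tendsto (fun η => ∑ k ∈ s, ‖r (v k) - r (u k + η)‖) (nhdsWithin (0 : ℝ) (Ioi 0))
      (nhds (∑ k ∈ s, ‖r (v k) - r (u k)‖)) := by
    refine tendsto_finsetSum _ fun k hk => (tendsto_const_nhds.sub ?_).norm
    have h1 : Tendsto (fun η : ℝ => u k + η) (nhdsWithin (0 : ℝ) (Ioi 0))
        (nhdsWithin (u k) (Icc a b)) := by
      refine tendsto_nhdsWithin_iff.2 ⟨?_, ?_⟩
      · have : Tendsto (fun η : ℝ => u k + η) (nhds 0) (nhds (u k + 0)) :=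
          (continuous_const.add continuous_id).tendsto 0
        rw [add_zero] at this
        exact this.mono_left nhdsWithin_le_nhds
      · filter_upwards [self_mem_nhdsWithin,
          nhdsWithin_le_nhds (gt_mem_nhds (sub_pos.2 (hsm k hk).2))] with η hpos hlt
        rw [mem_Ioi] at hpos
        exact ⟨by linarith [(huI k hk).1], by linarith [(hvI k hk).2]⟩
    exact (hcont _ (huI k hk)).tendsto.comp h1
  have hfin := le_of_tendsto hlim hshrink
  have hall : ∑ k ∈ Finset.range m, dist (r (I k).1) (r (I k).2) =
      ∑ k ∈ s, ‖r (v k) - r (u k)‖ := by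
    simp only [hdr]
    refine (Finset.sum_subset (Finset.filter_subset _ _) fun k hk hks => ?_).symm
    have : ¬ u k < v k := fun hc => hks (Finset.mem_filter.2 ⟨hk, hc⟩)
    have : v k = u k := le_antisymm (not_lt.1 this) (huv k)
    rw [this, sub_self, norm_zero]
  rw [hall]
  linarith

/-- A `DeltaAC` function with vanishing Δ-derivative (no jump at right-scattered points, zero
derivative within `T` at almost every right-dense point) is constant.  Its extension
`r ∘ tsCeil T`, constant across the gaps, is absolutely continuous on the real interval and has
zero derivative almost everywhere. -/
lemma DeltaAC.const_of_deriv_zero (hT : IsClosed T) (hmax : IsGreatest T t₀) (ha : a ∈ T)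
    (hat : a < t₀) (h : DeltaAC T a t₀ r)
    (hs : ∀ t ∈ Ico a t₀ ∩ T, RightScattered T t → r (tsSigma T t) = r t)
    (hd : ∀ᵐ t, t ∈ Ico a t₀ ∩ T → ¬ RightScattered T t →
      ∀ ε > (0 : ℝ), ∃ U ∈ nhds t, ∀ s ∈ U ∩ T, ‖r t - r s‖ ≤ ε * |t - s|) :
    ∀ u ∈ Icc a t₀ ∩ T, r u = r t₀ := by
  have hcf : ∀ v ∈ Icc a t₀, r (tsCeil T v) = r (tsFloor T v) := by
    intro v hv
    by_cases hvT : v ∈ T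
    · rw [tsCeil_self hvT, tsFloor_self hvT]
    · have hvt : v < t₀ := lt_of_le_of_ne hv.2 fun hc => hvT (hc ▸ hmax.1)
      rw [← (tsSigma_tsFloor hT hmax ha hv.1 hvt hvT).1]
      exact hs _ ⟨⟨le_tsFloor ha hv.1, (tsFloor_le ha hv.1).trans_lt hvt⟩,
        tsFloor_mem hT ha hv.1⟩ (rightScattered_tsFloor hT hmax ha hv.1 hvt hvT)
  have hAC : AbsolutelyContinuousOnInterval (fun v => r (tsCeil T v)) a t₀ := by
    refine absolutelyContinuousOnInterval_of_closed hat.le fun ε hε => ?_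
    obtain ⟨δ, hδ, hdel⟩ := h.finset hε
    refine ⟨δ, hδ, fun s u v hu hv huv hdis hsum => ?_⟩
    have hcu : ∀ k ∈ s, u k ≤ tsCeil T (u k) := fun k hk => le_tsCeil hmax.1 (hu k hk).2
    have hfv : ∀ k ∈ s, tsFloor T (v k) ≤ v k := fun k hk => tsFloor_le ha (hv k hk).1
    set s' := s.filter fun k => tsCeil T (u k) ≤ tsFloor T (v k) with hs'
    have hss : ∀ k ∈ s', k ∈ s ∧ tsCeil T (u k) ≤ tsFloor T (v k) := fun k hk =>
      Finset.mem_filter.1 hk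
    have key := hdel s' (fun k => tsCeil T (u k)) (fun k => tsFloor T (v k))
      (fun k hk => ⟨⟨(hu k (hss k hk).1).1.trans (hcu k (hss k hk).1),
        tsCeil_le hmax.1 (hu k (hss k hk).1).2⟩, tsCeil_mem hT hmax.1 (hu k (hss k hk).1).2⟩)
      (fun k hk => ⟨⟨le_tsFloor ha (hv k (hss k hk).1).1,
        (hfv k (hss k hk).1).trans (hv k (hss k hk).1).2⟩, tsFloor_mem hT ha (hv k (hss k hk).1).1⟩)
      (fun k hk => (hss k hk).2)
      (fun i hi j hj hij => (hdis i (hss i hi).1 j (hss j hj).1 hij).mono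
        (Icc_subset_Icc (hcu i (hss i hi).1) (hfv i (hss i hi).1))
        (Icc_subset_Icc (hcu j (hss j hj).1) (hfv j (hss j hj).1)))
      (by
        refine lt_of_le_of_lt ?_ hsum
        refine (Finset.sum_le_sum fun k hk => ?_).trans
          (Finset.sum_le_sum_of_subset_of_nonneg (Finset.filter_subset _ s)
            fun k hk _ => sub_nonneg.2 (huv k hk))
        linarith [hcu k (hss k hk).1, hfv k (hss k hk).1])
    refine lt_of_le_of_lt (le_of_eq ?_) key
    have h0 : ∑ k ∈ s', ‖r (tsFloor T (v k)) - r (tsCeil T (u k))‖ =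
        ∑ k ∈ s', ‖r (tsCeil T (v k)) - r (tsCeil T (u k))‖ :=
      Finset.sum_congr rfl fun k hk => by rw [hcf _ (hv k (hss k hk).1)]
    rw [h0]
    refine (Finset.sum_subset (Finset.filter_subset _ _) fun k hk hks => ?_).symm
    -- an interval free of points of `T` lies in one gap and contributes nothing
    have hlt : tsFloor T (v k) < tsCeil T (u k) := by
      by_contra hc
      exact hks (Finset.mem_filter.2 ⟨hk, not_lt.1 hc⟩)
    have hvc : v k ≤ tsCeil T (u k) := by
      by_contra hc
      have := le_tsFloor (tsCeil_mem hT hmax.1 (hu k hk).2) (not_le.1 hc).le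
      linarith
    have : tsCeil T (v k) = tsCeil T (u k) :=
      le_antisymm (tsCeil_le (tsCeil_mem hT hmax.1 (hu k hk).2) hvc)
        (tsCeil_le (tsCeil_mem hT hmax.1 (hv k hk).2)
          ((huv k hk).trans (le_tsCeil hmax.1 (hv k hk).2)))
    rw [this, sub_self, norm_zero]
  have hder : ∀ᵐ t, t ∈ uIcc a t₀ → HasDerivAt (fun v => r (tsCeil T v)) 0 t := by
    have hsc : ∀ᵐ t : ℝ, ¬ (t ∈ T ∧ RightScattered T t) := by
      have := (countable_rightScattered T).measure_zero volume
      simpa [ae_iff] using this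
    filter_upwards [hd, hsc, ae_ne_real a, ae_ne_real t₀] with t htd hts hta htt htI
    rw [uIcc_of_le hat.le] at htI
    have hat' : a < t := lt_of_le_of_ne htI.1 (Ne.symm hta)
    have htt' : t < t₀ := lt_of_le_of_ne htI.2 htt
    by_cases htT : t ∈ T
    · have hz := htd ⟨⟨hat'.le, htt'⟩, htT⟩ fun hc => hts ⟨htT, hc⟩
      rw [hasDerivAt_iff_isLittleO, Asymptotics.isLittleO_iff]
      intro c hc
      obtain ⟨U, hU, hUs⟩ := hz c hc
      obtain ⟨ρ, hρ, hball⟩ := Metric.mem_nhds_iff.1 hU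
      filter_upwards [Metric.ball_mem_nhds t hρ, Ioo_mem_nhds hat' htt'] with s hsb hsI
      have hsI' : s ∈ Icc a t₀ := ⟨hsI.1.le, hsI.2.le⟩
      rw [Metric.mem_ball, Real.dist_eq] at hsb
      rw [smul_zero, sub_zero, Real.norm_eq_abs, tsCeil_self htT]
      -- compare with a point of `T` between `t` and `s` at which the extension agrees
      have hpt : ∃ y ∈ T, r (tsCeil T s) = r y ∧ |t - y| ≤ |s - t| := by
        rcases le_total t s with hle | hle
        · refine ⟨tsFloor T s, tsFloor_mem hT ha hsI'.1, hcf s hsI', ?_⟩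
          have h1 := le_tsFloor htT hle
          have h2 := tsFloor_le ha hsI'.1
          rw [abs_of_nonpos (by linarith), abs_of_nonneg (by linarith)]
          linarith
        · refine ⟨tsCeil T s, tsCeil_mem hT hmax.1 hsI'.2, rfl, ?_⟩
          have h1 := tsCeil_le htT hle
          have h2 := le_tsCeil hmax.1 hsI'.2
          rw [abs_of_nonneg (by linarith), abs_of_nonpos (by linarith)]
          linarith
      obtain ⟨y, hyT, hry, hyd⟩ := hpt
      rw [hry, norm_sub_rev]
      refine (hUs y ⟨hball ?_, hyT⟩).trans (by gcongr)
      rw [Metric.mem_ball, Real.dist_eq, abs_sub_comm]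
      exact hyd.trans_lt hsb
    · have h1 := tsFloor_lt hT ha hat'.le htT
      have h2 := (tsSigma_tsFloor hT hmax ha hat'.le htt' htT).2
      refine (hasDerivAt_const t (r (tsCeil T t))).congr_of_eventuallyEq ?_
      filter_upwards [Ioo_mem_nhds h1 h2, Ioo_mem_nhds hat' htt'] with s hsI hsI'
      have h3 := tsCeil_mem hT hmax.1 hsI'.2.le
      have h4 := le_tsCeil hmax.1 hsI'.2.le
      have h5 : t ≤ tsCeil T s := by
        by_contra hc
        have := le_tsFloor h3 (not_le.1 hc).le
        linarith [hsI.1]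
      change r (tsCeil T s) = r (tsCeil T t)
      rw [le_antisymm (tsCeil_le (tsCeil_mem hT hmax.1 htt'.le) hsI.2.le) (tsCeil_le h3 h5)]
  obtain ⟨C, hC⟩ := hAC.const_of_ae_hasDerivAt_zero hder
  rw [uIcc_of_le hat.le] at hC
  intro u hu
  have h1 := hC u hu.1
  have h2 := hC t₀ (right_mem_Icc.2 hat.le)
  simp only [tsCeil_self hu.2, tsCeil_self hmax.1] at h1 h2
  rw [h1, h2]

end AbsCont


/-! ### Solutions are the fixed points of the Picard operator -/

section Solutions

variable {n : ℕ} {T : Set ℝ} {f : EuclideanSpace ℝ (Fin n) → ℝ → EuclideanSpace ℝ (Fin n)}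
  {t₀ L a : ℝ} {q₀ : EuclideanSpace ℝ (Fin n)} {p q : ℝ → EuclideanSpace ℝ (Fin n)}

lemma hasDeltaDerivAt_of_scattered {t : ℝ} {c : EuclideanSpace ℝ (Fin n)}
    (hq : ContinuousWithinAt q T t) (ht : RightScattered T t)
    (h : q (tsSigma T t) - q t = (tsSigma T t - t) • c) : HasDeltaDerivAt T q c t := by
  intro ε hε
  have ht' : t < tsSigma T t := ht
  have hc : ContinuousWithinAt (fun s => ‖q (tsSigma T t) - q s - (tsSigma T t - s) • c‖ -
      ε * |tsSigma T t - s|) T t := by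
    refine ((((continuousWithinAt_const).sub hq).sub ?_).norm).sub ?_
    · exact Continuous.continuousWithinAt (by fun_prop)
    · exact Continuous.continuousWithinAt (by fun_prop)
  have hneg : ‖q (tsSigma T t) - q t - (tsSigma T t - t) • c‖ - ε * |tsSigma T t - t| < 0 := by
    rw [h, sub_self, norm_zero, zero_sub, neg_lt_zero]
    exact mul_pos hε (abs_pos.2 (by linarith))
  have hev := hc.eventually (gt_mem_nhds hneg)
  obtain ⟨U, hU, hUs⟩ := mem_nhdsWithin_iff_exists_mem_nhds_inter.1 hev
  exact ⟨U, hU, fun s hs => (sub_neg.1 (hUs hs)).le⟩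

lemma hasDeltaDerivAt_of_dense {Q : ℝ → EuclideanSpace ℝ (Fin n)} {t : ℝ}
    {c : EuclideanSpace ℝ (Fin n)} (ht : ¬ RightScattered T t) (htT : t ∈ T)
    (hQ : HasDerivAt Q c t) (h : ∀ᶠ s in nhds t, s ∈ T → q s = Q s) :
    HasDeltaDerivAt T q c t := by
  intro ε hε
  have hσ : tsSigma T t = t := le_antisymm (not_lt.1 ht) (le_tsSigma T t)
  rw [hasDerivAt_iff_isLittleO] at hQ
  refine ⟨_, inter_mem (hQ.def hε) h, fun s hs => ?_⟩
  have h1 : ‖Q s - Q t - (s - t) • c‖ ≤ ε * ‖s - t‖ := hs.1.1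
  have h2 : q s = Q s := hs.1.2 hs.2
  rw [hσ, h2, h.self_of_nhds htT, abs_sub_comm, ← Real.norm_eq_abs]
  convert! h1 using 1
  rw [← norm_neg]
  congr 1
  module

/-- Across the gap at a right-scattered point the Picard image is affine, with the slope
prescribed by the equation. -/
lemma LiftData.picardOp_scattered (H : LiftData T f t₀ L) (ha : a ∈ T) (hat : a < t₀)
    (hp : ContinuousOn p (Icc a t₀ ∩ T)) {t : ℝ} (ht : t ∈ Ico a t₀ ∩ T) :
    picardOp T f t₀ q₀ p (tsSigma T t) - picardOp T f t₀ q₀ p t =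
      (tsSigma T t - t) • f (p (tsSigma T t)) t := by
  rw [H.picardOp_sub ha hat hp ⟨ht.1.1, ht.1.2.le⟩
    (tsSigma_mem_Icc H.closed H.isMax ht.1.1 ht.1.2).1, ← intervalIntegral.integral_const]
  refine intervalIntegral.integral_congr_ae ?_
  filter_upwards [ae_ne_real (tsSigma T t)] with s hne hs
  rw [uIoc_of_le (le_tsSigma T t)] at hs
  have hlt : s < tsSigma T t := lt_of_le_of_ne hs.2 hne
  rw [liftRhs, tsFloor_gap ht.2 hs.1.le hlt, tsSigma_gap H.closed H.isMax hs.1.le hlt]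

lemma LiftData.picardOp_hasDerivAt (H : LiftData T f t₀ L) (ha : a ∈ T) (hat : a < t₀)
    (hp : ContinuousOn p (Icc a t₀ ∩ T)) :
    ∀ᵐ t, t ∈ Ico a t₀ ∩ T →
      HasDerivAt (picardOp T f t₀ q₀ p) (f (p (tsSigma T t)) t) t := by
  filter_upwards [(H.integrable_comp ha hat hp).1.ae_hasDerivAt_integral] with t ht htI
  rw [uIcc_of_le hat.le] at ht
  have h := (ht ⟨htI.1.1, htI.1.2.le⟩ t₀ (right_mem_Icc.2 hat.le)).const_add q₀
  have e : picardOp T f t₀ q₀ p =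
      fun u => q₀ + ∫ s in t₀..u, liftRhs T f (p (tsSigma T s)) s := by
    funext u
    rw [picardOp, intervalIntegral.integral_symm u t₀, sub_eq_add_neg]
  rw [e]
  rwa [liftRhs, tsFloor_self htI.2] at h

lemma picardOp_self : picardOp T f t₀ q₀ p t₀ = q₀ := by
  simp [picardOp]

/-- A global fixed point is a solution on every `[a, t₀]_T`.  Globality matters: the Δ-derivative
at `a` also tests points of `T` to the left of `a`. -/
lemma LiftData.isSol_of_fixed (H : LiftData T f t₀ L)
    (hq : ∀ a ∈ T, a < t₀ → ContinuousOn q (Icc a t₀ ∩ T) ∧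
      ∀ u ∈ Icc a t₀ ∩ T, q u = picardOp T f t₀ q₀ q u)
    (ha : a ∈ T) (hat : a < t₀) : IsSolIccS T univ f t₀ q₀ q a t₀ := by
  obtain ⟨hc, hfix⟩ := hq a ha hat
  have hcw : ∀ t ∈ T, t < t₀ → ContinuousWithinAt q T t := by
    intro t ht htt
    by_cases hex : ∃ b ∈ T, b < t
    · obtain ⟨b, hb, hbt⟩ := hex
      refine ((hq b hb (hbt.trans htt)).1 t ⟨⟨hbt.le, htt.le⟩, ht⟩).mono_of_mem_nhdsWithin ?_
      filter_upwards [self_mem_nhdsWithin, nhdsWithin_le_nhds (lt_mem_nhds hbt)] with s hs hbs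
      exact ⟨⟨hbs.le, H.isMax.2 hs⟩, hs⟩
    · push Not at hex
      exact ((hq t ht htt).1 t ⟨⟨le_rfl, htt.le⟩, ht⟩).mono
        fun s hs => ⟨⟨hex s hs, H.isMax.2 hs⟩, hs⟩
  have hscat : ∀ t ∈ Ico a t₀ ∩ T, RightScattered T t →
      HasDeltaDerivAt T q (f (q (tsSigma T t)) t) t := by
    intro t ht hsc
    refine hasDeltaDerivAt_of_scattered (hcw t ht.2 ht.1.2) hsc ?_
    rw [← H.picardOp_scattered (q₀ := q₀) ha hat hc ht,
      ← hfix t ⟨⟨ht.1.1, ht.1.2.le⟩, ht.2⟩,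
      ← hfix _ (tsSigma_mem_Icc H.closed H.isMax ht.1.1 ht.1.2)]
  refine ⟨fun _ _ => mem_univ _, ?_, ?_, ?_⟩
  · obtain ⟨M, hM, hlip⟩ := H.picardOp_lipschitz (q₀ := q₀) ha hat hc
    refine deltaAC_of_lipschitz hM fun u hu v hv => ?_
    rw [hfix u hu, hfix v hv]
    exact hlip u hu.1 v hv.1
  · rw [hfix t₀ ⟨right_mem_Icc.2 hat.le, H.isMax.1⟩, picardOp_self]
  · rw [ae_delta_iff (measurableSet_Ico.inter H.closed.measurableSet) inter_subset_right
      H.closed]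
    refine ⟨?_, hscat⟩
    filter_upwards [H.picardOp_hasDerivAt (q₀ := q₀) ha hat hc, ae_ne_real a] with t ht hta htI
    by_cases hsc : RightScattered T t
    · exact hscat t htI hsc
    · refine hasDeltaDerivAt_of_dense hsc htI.2 (ht htI) ?_
      filter_upwards [lt_mem_nhds (lt_of_le_of_ne htI.1.1 (Ne.symm hta))] with s hs hsT
      exact hfix s ⟨⟨hs.le, H.isMax.2 hsT⟩, hsT⟩

/-- Conversely, a solution on `[a, t₀]_T` is a fixed point there: its difference with its own
Picard image has vanishing Δ-derivative and vanishes at `t₀`. -/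
lemma LiftData.fixed_of_isSol (H : LiftData T f t₀ L) (ha : a ∈ T) (hat : a < t₀)
    (hq : IsSolIccS T univ f t₀ q₀ q a t₀) :
    ContinuousOn q (Icc a t₀ ∩ T) ∧ ∀ u ∈ Icc a t₀ ∩ T, q u = picardOp T f t₀ q₀ q u := by
  obtain ⟨-, hAC, hq0, hder⟩ := hq
  have hc := hAC.continuousOn
  refine ⟨hc, ?_⟩
  rw [ae_delta_iff (measurableSet_Ico.inter H.closed.measurableSet) inter_subset_right
    H.closed] at hder
  obtain ⟨M, hM, hlip⟩ := H.picardOp_lipschitz (q₀ := q₀) ha hat hc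
  have hAC' : DeltaAC T a t₀ (picardOp T f t₀ q₀ q) :=
    deltaAC_of_lipschitz hM fun u hu v hv => hlip u hu.1 v hv.1
  have key := (hAC.sub hAC').const_of_deriv_zero H.closed H.isMax ha hat ?_ ?_
  · intro u hu
    have := key u hu
    rw [picardOp_self, hq0, sub_self] at this
    exact sub_eq_zero.1 this
  · intro t ht hsc
    -- at a right-scattered point the difference quotient is exact: test `s = t` for every `ε`
    have hjump : q (tsSigma T t) - q t = (tsSigma T t - t) • f (q (tsSigma T t)) t := by
      rw [← sub_eq_zero, ← norm_le_zero_iff]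
      refine le_of_forall_pos_le_add fun ε hε => ?_
      have hpos : 0 < |tsSigma T t - t| := abs_pos.2 (sub_ne_zero.2 (ne_of_gt hsc))
      obtain ⟨U, hU, hUs⟩ := hder.2 t ht hsc (ε / |tsSigma T t - t|) (by positivity)
      have := hUs t ⟨mem_of_mem_nhds hU, ht.2⟩
      rwa [div_mul_cancel₀ _ hpos.ne', ← zero_add ε] at this
    have hp := H.picardOp_scattered (q₀ := q₀) ha hat hc ht
    rw [← hp] at hjump
    rw [sub_eq_sub_iff_sub_eq_sub]
    exact hjump
  · filter_upwards [hder.1, H.picardOp_hasDerivAt (q₀ := q₀) ha hat hc] with t ht1 ht2 htI hsc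
      ε hε
    have h1 := ht1 htI
    have h2 := hasDeltaDerivAt_of_dense hsc htI.2 (ht2 htI)
      (Eventually.of_forall fun s _ => rfl)
    have hσ : tsSigma T t = t := le_antisymm (not_lt.1 hsc) (le_tsSigma T t)
    obtain ⟨U, hU, hUs⟩ := h1 (ε / 2) (by positivity)
    obtain ⟨V, hV, hVs⟩ := h2 (ε / 2) (by positivity)
    refine ⟨U ∩ V, inter_mem hU hV, fun s hs => ?_⟩
    have e1 := hUs s ⟨hs.1.1, hs.2⟩
    have e2 := hVs s ⟨hs.1.2, hs.2⟩
    rw [hσ] at e1 e2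
    have e3 := norm_sub_le (q t - q s - (t - s) • f (q t) t)
      (picardOp T f t₀ q₀ q t - picardOp T f t₀ q₀ q s - (t - s) • f (q t) t)
    have e4 : q t - q s - (t - s) • f (q t) t -
        (picardOp T f t₀ q₀ q t - picardOp T f t₀ q₀ q s - (t - s) • f (q t) t) =
        q t - picardOp T f t₀ q₀ q t - (q s - picardOp T f t₀ q₀ q s) := by abel
    rw [e4] at e3
    linarith

/-- When `t₀ = max T` is not the only point of `T`, `a ⊴ t₀ ⊴ b` means `a < t₀ = b`. -/
lemma trile_iff (hT : T.Nontrivial) (hmax : IsGreatest T t₀) {a b : ℝ} :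
    Trile T t₀ a b ↔ a < t₀ ∧ t₀ = b := by
  refine ⟨?_, fun h => Or.inr (Or.inl ⟨hmax, h⟩)⟩
  rintro (⟨hl, -, -⟩ | ⟨-, h⟩ | ⟨-, h, -⟩)
  · obtain ⟨x, hx, y, hy, hxy⟩ := hT
    exact absurd ((le_antisymm (hmax.2 hx) (hl.2 hx)).trans
      (le_antisymm (hl.2 hy) (hmax.2 hy))) hxy
  · exact h
  · exact absurd hmax h

end Solutions


theorem stmt7 {n : ℕ} (T : Set ℝ) (hTclosed : IsClosed T) (hTnontriv : T.Nontrivial)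
    (f : EuclideanSpace ℝ (Fin n) → ℝ → EuclideanSpace ℝ (Fin n))
    (hf : DeltaCaratheodory T (univ : Set (EuclideanSpace ℝ (Fin n))) f)
    (t₀ : ℝ) (hmax : IsGreatest T t₀) (q₀ : EuclideanSpace ℝ (Fin n))
    (hinf : HInfty T (univ : Set (EuclideanSpace ℝ (Fin n))) f)
    (hlip : HglobLip T (univ : Set (EuclideanSpace ℝ (Fin n))) f) :
    ∃ (q : ℝ → EuclideanSpace ℝ (Fin n)) (I : Set ℝ),
      IsMaxSolS T univ f t₀ q₀ q I ∧
      (∀ q₁ I₁, IsMaxSolS T univ f t₀ q₀ q₁ I₁ → I₁ ∩ T = I ∩ T ∧ EqOn q₁ q (I ∩ T)) ∧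
      I ∩ T = T := by
  obtain ⟨L, H⟩ := exists_liftData hTclosed hmax hf hinf hlip
  obtain ⟨q, hq⟩ := H.exists_fixed q₀
  have hex : ∃ a ∈ T, a < t₀ := by
    obtain ⟨x, hx, hne⟩ := hTnontriv.exists_ne t₀
    exact ⟨x, hx, lt_of_le_of_ne (hmax.2 hx) hne⟩
  have hsol : IsSolS T univ f t₀ q₀ q univ := by
    refine ⟨⟨ordConnected_univ, ?_⟩, fun _ _ => mem_univ _, fun a ha b hb hab => ?_⟩
    · obtain ⟨a, ha, hat⟩ := hex
      exact ⟨a, ⟨mem_univ _, ha⟩, t₀, ⟨mem_univ _, hmax.1⟩,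
        (trile_iff hTnontriv hmax).2 ⟨hat, rfl⟩⟩
    · obtain ⟨hat, rfl⟩ := (trile_iff hTnontriv hmax).1 hab
      exact H.isSol_of_fixed hq ha.2 hat
  -- every solution is a restriction of `q`
  have huniq : ∀ q₁ I₁, IsSolS T univ f t₀ q₀ q₁ I₁ → EqOn q₁ q (I₁ ∩ T) := by
    intro q₁ I₁ h₁
    obtain ⟨⟨-, b, hb, c, hc, hbc⟩, -, hs⟩ := h₁
    obtain ⟨hbt, rfl⟩ := (trile_iff hTnontriv hmax).1 hbc
    have key : ∀ a ∈ I₁ ∩ T, a < t₀ → EqOn q₁ q (Icc a t₀ ∩ T) := by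
      intro a ha hat
      obtain ⟨hc₁, hf₁⟩ := H.fixed_of_isSol ha.2 hat
        (hs a ha t₀ hc ((trile_iff hTnontriv hmax).2 ⟨hat, rfl⟩))
      obtain ⟨hc₂, hf₂⟩ := hq a ha.2 hat
      exact H.unique ha.2 hat hc₁ hc₂ hf₁ hf₂
    intro t ht
    rcases lt_or_eq_of_le (hmax.2 ht.2) with h | h
    · exact key t ht h ⟨⟨le_rfl, h.le⟩, ht.2⟩
    · exact key b hb hbt ⟨⟨by rw [h]; exact hbt.le, h.le⟩, ht.2⟩
  refine ⟨q, univ, ⟨hsol, fun q₁ I₁ _ hext => ?_⟩, fun q₁ I₁ h₁ => ?_, univ_inter T⟩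
  · exact Subset.antisymm (inter_subset_inter_left _ (subset_univ _)) hext.1
  · have heq := huniq q₁ I₁ h₁.1
    -- the global solution extends `q₁`, so maximality makes the two intervals agree
    have hI := h₁.2 q univ hsol ⟨inter_subset_inter_left _ (subset_univ _), heq.symm⟩
    exact ⟨hI.symm, hI ▸ heq⟩

end
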